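/- Let V and W be nontrivial real Hilbert spaces and a : V × W → ℝ a bounded bilinear form. Define β₁ = inf over nonzero v ∈ V of sup over nonzero w ∈ W of a(v, w)/(‖v‖‖w‖), and β₂ = inf over nonzero w ∈ W of sup over nonzero v ∈ V of a(v, w)/(‖v‖‖w‖). If β₁ > 0 and β₂ > 0, then β₁ = β₂. -/

import Mathlib

/-!
Read `a` as an operator `T : V → W*`, so that `β₁` is the largest `c` with `c ‖v‖ ≤ ‖T v‖` for
all `v`. If `β₁ > 0`, Hahn–Banach extends `f ∘ T⁻¹` from the range of `T` to `W*`, so every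
`f ∈ V*` is `g ∘ T` for some `g ∈ W**` with `β₁ ‖g‖ ≤ ‖f‖`. When `T* : g ↦ g ∘ T` is injective this
`g` is unique, so `T*` is bounded below by `β₁` as well; conversely, testing `v` against a norming
functional `f = g ∘ T` shows that every lower bound of `T*` is one of `T`. Finally `T*` extends
`w ↦ a(·, w)` from `W` to `W**`, in which `W` is dense, so the largest lower bound of `T*` is `β₂`.
-/

open NormedSpace

section MinModulus

variable {𝕜 E F G : Type*} [RCLike 𝕜] [NormedAddCommGroup E] [NormedSpace 𝕜 E]
  [NormedAddCommGroup F] [NormedSpace 𝕜 F] [NormedAddCommGroup G] [NormedSpace 𝕜 G]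

/-- The minimum modulus `inf_{v ≠ 0} ‖T v‖ / ‖v‖` of a bounded operator. For the operator
`V → W*` induced by a bilinear form on `V × W` it is the inf-sup constant of the form. On the
trivial space it takes the junk value `0`. -/
noncomputable def minModulus (T : E →L[𝕜] F) : ℝ :=
  sInf {x : ℝ | ∃ v : E, v ≠ 0 ∧ x = ‖T v‖ / ‖v‖}

/-- The Banach space adjoint `T* : F* → E*`, `g ↦ g ∘ T`, of a bounded operator `T : E → F`;
`precomp` is specialized here to normed spaces, where the duals carry the operator norm. -/
noncomputable abbrev strongDualMap (T : E →L[𝕜] F) : StrongDual 𝕜 F →L[𝕜] StrongDual 𝕜 E :=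
  T.precomp 𝕜

theorem minModulus_nonneg (T : E →L[𝕜] F) : 0 ≤ minModulus T :=
  Real.sInf_nonneg <| by rintro _ ⟨v, -, rfl⟩; positivity

theorem minModulus_mul_norm_le (T : E →L[𝕜] F) (v : E) : minModulus T * ‖v‖ ≤ ‖T v‖ := by
  rcases eq_or_ne v 0 with rfl | hv
  · simp
  · rw [← le_div_iff₀ (norm_pos_iff.2 hv)]
    exact csInf_le ⟨0, by rintro _ ⟨u, -, rfl⟩; positivity⟩ ⟨v, hv, rfl⟩

theorem le_minModulus [Nontrivial E] {T : E →L[𝕜] F} {c : ℝ} (hT : ∀ v, c * ‖v‖ ≤ ‖T v‖) :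
    c ≤ minModulus T := by
  obtain ⟨v₀, hv₀⟩ := exists_ne (0 : E)
  refine le_csInf ⟨_, v₀, hv₀, rfl⟩ ?_
  rintro _ ⟨v, hv, rfl⟩
  exact (le_div_iff₀ (norm_pos_iff.2 hv)).2 (hT v)

theorem injective_of_minModulus_pos {T : E →L[𝕜] F} (hT : 0 < minModulus T) :
    Function.Injective T :=
  (injective_iff_map_eq_zero T).2 fun v hv =>
    norm_le_zero_iff.1 <| nonpos_of_mul_nonpos_right
      ((minModulus_mul_norm_le T v).trans_eq (norm_eq_zero.2 hv)) hT

theorem minModulus_comp_of_denseRange [Nontrivial E] (T : F →L[𝕜] G)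
    (ι : E →ₗᵢ[𝕜] F) (hι : DenseRange ι) :
    minModulus (T.comp ι.toContinuousLinearMap) = minModulus T := by
  have := ι.injective.nontrivial
  refine le_antisymm (le_minModulus fun y => ?_) (le_minModulus fun v => ?_)
  · refine hι.induction_on y
      (isClosed_le (continuous_const.mul continuous_norm) T.continuous.norm) fun v => ?_
    rw [ι.norm_map]
    exact minModulus_mul_norm_le _ v
  · rw [← ι.norm_map]
    exact minModulus_mul_norm_le T (ι v)

theorem exists_comp_eq_and_minModulus_mul_norm_le {T : E →L[𝕜] F} (hT : 0 < minModulus T)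
    (f : StrongDual 𝕜 E) :
    ∃ g : StrongDual 𝕜 F, g.comp T = f ∧ minModulus T * ‖g‖ ≤ ‖f‖ := by
  let e := LinearEquiv.ofInjective (T : E →ₗ[𝕜] F) (injective_of_minModulus_pos hT)
  have hbound (y : LinearMap.range (T : E →ₗ[𝕜] F)) :
      ‖((f : E →ₗ[𝕜] 𝕜) ∘ₗ e.symm.toLinearMap) y‖ ≤ ‖f‖ / minModulus T * ‖y‖ := by
    obtain ⟨v, rfl⟩ := e.surjective y
    calc ‖f (e.symm (e v))‖ ≤ ‖f‖ * ‖v‖ := by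
          rw [e.symm_apply_apply]; exact f.le_opNorm v
      _ = ‖f‖ / minModulus T * (minModulus T * ‖v‖) := by field_simp
      _ ≤ ‖f‖ / minModulus T * ‖e v‖ := by gcongr; exact minModulus_mul_norm_le T v
  obtain ⟨g, hg, hnorm⟩ := exists_extension_norm_eq _ (LinearMap.mkContinuous _ _ hbound)
  refine ⟨g, ContinuousLinearMap.ext fun v => ?_, ?_⟩
  · exact (hg (e v)).trans (congrArg f (e.symm_apply_apply v))
  · rw [hnorm, ← le_div_iff₀' hT]
    exact LinearMap.mkContinuous_norm_le _ (by positivity) _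

theorem minModulus_le_minModulus_strongDualMap [Nontrivial E] {T : E →L[𝕜] F}
    (hT : 0 < minModulus T) (hinj : Function.Injective (strongDualMap T)) :
    minModulus T ≤ minModulus (strongDualMap T) := by
  have := (injective_of_minModulus_pos hT).nontrivial
  refine le_minModulus fun g => ?_
  obtain ⟨g', hg', hnorm⟩ := exists_comp_eq_and_minModulus_mul_norm_le hT (g.comp T)
  rwa [hinj hg'] at hnorm

theorem minModulus_strongDualMap_le_minModulus [Nontrivial E] {T : E →L[𝕜] F}
    (hT : 0 < minModulus T) : minModulus (strongDualMap T) ≤ minModulus T :=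
  le_minModulus fun v => by
    obtain ⟨f, hf, hfv⟩ := exists_dual_vector'' 𝕜 v
    obtain ⟨g, rfl, -⟩ := exists_comp_eq_and_minModulus_mul_norm_le hT f
    have hgv : ‖v‖ = ‖g (T v)‖ := by
      rw [← ContinuousLinearMap.comp_apply, hfv, RCLike.norm_ofReal, abs_norm]
    have hg : minModulus (strongDualMap T) * ‖g‖ ≤ 1 := (minModulus_mul_norm_le _ g).trans hf
    calc minModulus (strongDualMap T) * ‖v‖
        ≤ minModulus (strongDualMap T) * (‖g‖ * ‖T v‖) := by
          rw [hgv]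
          exact mul_le_mul_of_nonneg_left (g.le_opNorm _) (minModulus_nonneg _)
      _ = minModulus (strongDualMap T) * ‖g‖ * ‖T v‖ := (mul_assoc _ _ _).symm
      _ ≤ ‖T v‖ := mul_le_of_le_one_left (norm_nonneg _) hg

theorem minModulus_strongDualMap_eq_minModulus [Nontrivial E] {T : E →L[𝕜] F}
    (hT : 0 < minModulus T) (hdual : 0 < minModulus (strongDualMap T)) :
    minModulus (strongDualMap T) = minModulus T :=
  (minModulus_strongDualMap_le_minModulus hT).antisymm
    (minModulus_le_minModulus_strongDualMap hT (injective_of_minModulus_pos hdual))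

theorem minModulus_strongDualMap_eq_minModulus_flip [Nontrivial F]
    (hF : DenseRange (inclusionInDoubleDual 𝕜 F)) (B : E →L[𝕜] StrongDual 𝕜 F) :
    minModulus (strongDualMap B) = minModulus B.flip :=
  (minModulus_comp_of_denseRange (strongDualMap B) (inclusionInDoubleDualLi 𝕜) hF).symm

end MinModulus

theorem inclusionInDoubleDual_surjective (𝕜 H : Type*) [RCLike 𝕜] [NormedAddCommGroup H]
    [InnerProductSpace 𝕜 H] [CompleteSpace H] :
    Function.Surjective (inclusionInDoubleDual 𝕜 H) := by
  intro Φ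
  let ψ : StrongDual 𝕜 H := ((starL 𝕜 : 𝕜 ≃L⋆[𝕜] 𝕜) : 𝕜 →L⋆[𝕜] 𝕜).comp
    (Φ.comp (InnerProductSpace.toDualMap 𝕜 H).toContinuousLinearMap)
  refine ⟨(InnerProductSpace.toDual 𝕜 H).symm ψ, ContinuousLinearMap.ext fun f => ?_⟩
  obtain ⟨u, rfl⟩ := (InnerProductSpace.toDual 𝕜 H).surjective f
  rw [dual_def, InnerProductSpace.toDual_apply_apply, ← inner_conj_symm,
    InnerProductSpace.toDual_symm_apply]
  exact star_star _

section InfSup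

variable {V W : Type*} [NormedAddCommGroup V] [NormedSpace ℝ V]
  [NormedAddCommGroup W] [NormedSpace ℝ W]

theorem sSup_apply_div_norm_eq_norm (f : StrongDual ℝ W) :
    sSup {y : ℝ | ∃ w : W, w ≠ 0 ∧ y = f w / ‖w‖} = ‖f‖ := by
  set S := {y : ℝ | ∃ w : W, w ≠ 0 ∧ y = f w / ‖w‖}
  have hle : ∀ y ∈ S, y ≤ ‖f‖ := by
    rintro _ ⟨w, -, rfl⟩
    exact (div_le_div_of_nonneg_right (Real.le_norm_self _) (norm_nonneg w)).trans
      (f.ratio_le_opNorm w)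
  have hge {w : W} (hw : w ≠ 0) : f w / ‖w‖ ≤ sSup S := le_csSup ⟨_, hle⟩ ⟨w, hw, rfl⟩
  have habs {w : W} (hw : w ≠ 0) : ‖f w‖ / ‖w‖ ≤ sSup S := by
    rcases abs_choice (f w) with h | h
    · simpa only [Real.norm_eq_abs, h] using hge hw
    · simpa only [Real.norm_eq_abs, h, map_neg, norm_neg] using hge (neg_ne_zero.2 hw)
  have hnonneg : 0 ≤ sSup S := by
    rcases S.eq_empty_or_nonempty with h | ⟨_, w, hw, -⟩
    · simp [h]
    · exact le_trans (by positivity) (habs hw)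
  refine le_antisymm (Real.sSup_le hle (norm_nonneg f)) (f.opNorm_le_bound' hnonneg fun w hw => ?_)
  have hw' := norm_ne_zero_iff.1 hw
  exact (div_le_iff₀ (norm_pos_iff.2 hw')).1 (habs hw')

theorem sInf_sSup_eq_minModulus (B : V →L[ℝ] StrongDual ℝ W) :
    sInf {x : ℝ | ∃ v : V, v ≠ 0 ∧
      x = sSup {y : ℝ | ∃ w : W, w ≠ 0 ∧ y = B v w / (‖v‖ * ‖w‖)}} = minModulus B := by
  have hsup (v : V) :
      sSup {y : ℝ | ∃ w : W, w ≠ 0 ∧ y = B v w / (‖v‖ * ‖w‖)} = ‖B v‖ / ‖v‖ := by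
    have h := sSup_apply_div_norm_eq_norm (‖v‖⁻¹ • B v)
    simpa only [smul_apply, smul_eq_mul, norm_smul, norm_inv, norm_norm,
      inv_mul_eq_div, div_div] using h
  simp only [hsup, minModulus]

/-- Asking for density in the bidual, rather than reflexivity, lets `W` be incomplete. -/
theorem inf_sup_constants_eq_general [Nontrivial V] [Nontrivial W]
    (hW : DenseRange (inclusionInDoubleDual ℝ W)) (B : V →L[ℝ] StrongDual ℝ W) (β₁ β₂ : ℝ)
    (hβ₁ : β₁ = sInf {x : ℝ | ∃ v : V, v ≠ 0 ∧
      x = sSup {y : ℝ | ∃ w : W, w ≠ 0 ∧ y = B v w / (‖v‖ * ‖w‖)}})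
    (hβ₂ : β₂ = sInf {x : ℝ | ∃ w : W, w ≠ 0 ∧
      x = sSup {y : ℝ | ∃ v : V, v ≠ 0 ∧ y = B v w / (‖v‖ * ‖w‖)}})
    (h₁ : 0 < β₁) (h₂ : 0 < β₂) :
    β₁ = β₂ := by
  have hβ₁' : β₁ = minModulus B := hβ₁.trans (sInf_sSup_eq_minModulus B)
  have hβ₂' : β₂ = minModulus (strongDualMap B) := by
    rw [minModulus_strongDualMap_eq_minModulus_flip hW, ← sInf_sSup_eq_minModulus B.flip, hβ₂]
    simp only [ContinuousLinearMap.flip_apply, mul_comm]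
  rw [hβ₁', hβ₂', minModulus_strongDualMap_eq_minModulus (hβ₁' ▸ h₁) (hβ₂' ▸ h₂)]

end InfSup

/-- For a bounded bilinear form `a` on nontrivial real Hilbert spaces `V × W`, if the
two inf-sup constants
`β₁ = inf_{v ≠ 0} sup_{w ≠ 0} a(v,w)/(‖v‖‖w‖)` and
`β₂ = inf_{w ≠ 0} sup_{v ≠ 0} a(v,w)/(‖v‖‖w‖)`
are both positive, then they are equal. -/
theorem inf_sup_constants_eq
    {V W : Type*} [NormedAddCommGroup V] [InnerProductSpace ℝ V] [CompleteSpace V]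
    [NormedAddCommGroup W] [InnerProductSpace ℝ W] [CompleteSpace W]
    (hV : ∃ v : V, v ≠ 0) (hW : ∃ w : W, w ≠ 0)
    (a : V →ₗ[ℝ] W →ₗ[ℝ] ℝ) (M : ℝ) (hM : 0 ≤ M)
    (hbound : ∀ v w, |a v w| ≤ M * ‖v‖ * ‖w‖)
    (β₁ β₂ : ℝ)
    (hβ₁ : β₁ = sInf {x : ℝ | ∃ v : V, v ≠ 0 ∧
      x = sSup {y : ℝ | ∃ w : W, w ≠ 0 ∧ y = a v w / (‖v‖ * ‖w‖)}})
    (hβ₂ : β₂ = sInf {x : ℝ | ∃ w : W, w ≠ 0 ∧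
      x = sSup {y : ℝ | ∃ v : V, v ≠ 0 ∧ y = a v w / (‖v‖ * ‖w‖)}})
    (h₁ : 0 < β₁) (h₂ : 0 < β₂) :
    β₁ = β₂ := by
  have := (nontrivial_iff_exists_ne (0 : V)).2 hV
  have := (nontrivial_iff_exists_ne (0 : W)).2 hW
  exact inf_sup_constants_eq_general (inclusionInDoubleDual_surjective ℝ W).denseRange
    (a.mkContinuous₂ M hbound) β₁ β₂ hβ₁ hβ₂ h₁ h₂
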